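/- Let q ≥ 8 be an even prime power. The UnΓ-lines of the twisted cubic C form a single orbit under G_q, of size q³ − q, namely the orbit of the line ℓ through (0:0:0:1) and (1:0:1:0). Moreover, the stabilizer in G_q of any UnΓ-line is trivial. -/

import Mathlib

open Matrix Submodule

noncomputable section

/-- Row-vector action of an invertible matrix on subspaces of `F^4`:
a projectivity of `PG(3,q)` induced by the matrix. -/
def projAct (F : Type) [Field F] (A : GL (Fin 4) F) :
    Submodule F (Fin 4 → F) → Submodule F (Fin 4 → F) :=
  fun W => W.map (Matrix.vecMulLinear (A : Matrix (Fin 4) (Fin 4) F))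

/-- Representative vectors of the points of the twisted cubic. -/
def cubicVecs (F : Type) [Field F] : Set (Fin 4 → F) :=
  {v | (∃ t : F, v = ![t ^ 3, t ^ 2, t, 1]) ∨ v = ![1, 0, 0, 0]}

/-- The twisted cubic, as a set of projective points (1-dimensional subspaces). -/
def twistedCubic (F : Type) [Field F] : Set (Submodule F (Fin 4 → F)) :=
  (fun v => Submodule.span F {v}) '' cubicVecs F

/-- The group `G_q` of projectivities fixing the twisted cubic, modeled as those maps
on subspaces that are induced by an invertible matrix and map the cubic onto itself. -/
def Gq (F : Type) [Field F] :
    Set ((Submodule F (Fin 4 → F)) → (Submodule F (Fin 4 → F))) :=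
  {f | (∃ A : GL (Fin 4) F, f = projAct F A) ∧ f '' twistedCubic F = twistedCubic F}

def isPoint (F : Type) [Field F] (W : Submodule F (Fin 4 → F)) : Prop :=
  Module.finrank F W = 1

def isLine (F : Type) [Field F] (W : Submodule F (Fin 4 → F)) : Prop :=
  Module.finrank F W = 2

/-- The orbit of a line under `G_q`. -/
def lineOrbit (F : Type) [Field F] (ℓ : Submodule F (Fin 4 → F)) :
    Set (Submodule F (Fin 4 → F)) :=
  {m | ∃ f ∈ Gq F, f ℓ = m}

/-- The stabilizer of a line in `G_q`. -/
def lineStab (F : Type) [Field F] (ℓ : Submodule F (Fin 4 → F)) :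
    Set ((Submodule F (Fin 4 → F)) → (Submodule F (Fin 4 → F))) :=
  {f ∈ Gq F | f ℓ = ℓ}

/-- The linear form `y ↦ c0 y0 + c1 y1 + c2 y2 + c3 y3` defining a plane. -/
def planeForm (F : Type) [Field F] (c : Fin 4 → F) : (Fin 4 → F) →ₗ[F] F where
  toFun y := c 0 * y 0 + c 1 * y 1 + c 2 * y 2 + c 3 * y 3
  map_add' a b := by simp only [Pi.add_apply]; ring
  map_smul' r a := by simp only [Pi.smul_apply, smul_eq_mul, RingHom.id_apply]; ring

/-- The plane `π(c0,c1,c2,c3)`. -/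
def planeOf (F : Type) [Field F] (c : Fin 4 → F) : Submodule F (Fin 4 → F) :=
  LinearMap.ker (planeForm F c)

/-- The null polarity `𝔄`: the polar subspace of `W` w.r.t. the bilinear form
sending a point `(x0:x1:x2:x3)` to the plane `π(x3, −3x2, 3x1, −x0)`. -/
def nullPolarity (F : Type) [Field F] (W : Submodule F (Fin 4 → F)) :
    Submodule F (Fin 4 → F) :=
  ⨅ x ∈ (W : Set (Fin 4 → F)), planeOf F ![x 3, -(3 * x 2), 3 * x 1, -(x 0)]

/-- The tangent line to the twisted cubic at `P(t)`, `t ∈ F`. -/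
def tangentAt (F : Type) [Field F] (t : F) : Submodule F (Fin 4 → F) :=
  Submodule.span F {![t ^ 3, t ^ 2, t, 1], ![3 * t ^ 2, 2 * t, 1, 0]}

/-- The tangent line to the twisted cubic at `P(∞)`. -/
def tangentAtInf (F : Type) [Field F] : Submodule F (Fin 4 → F) :=
  Submodule.span F {![1, 0, 0, 0], ![0, 1, 0, 0]}

def isTangent (F : Type) [Field F] (ℓ : Submodule F (Fin 4 → F)) : Prop :=
  (∃ t : F, ℓ = tangentAt F t) ∨ ℓ = tangentAtInf F

/-- The osculating plane at `P(t)`, `t ∈ F`. -/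
def oscPlane (F : Type) [Field F] (t : F) : Submodule F (Fin 4 → F) :=
  planeOf F ![1, -(3 * t), 3 * t ^ 2, -(t ^ 3)]

/-- The osculating plane at `P(∞)`. -/
def oscPlaneInf (F : Type) [Field F] : Submodule F (Fin 4 → F) :=
  planeOf F ![0, 0, 0, 1]

def isOscPlane (F : Type) [Field F] (π : Submodule F (Fin 4 → F)) : Prop :=
  (∃ t : F, π = oscPlane F t) ∨ π = oscPlaneInf F

/-- A real chord: the line joining two distinct points of the twisted cubic. -/
def isRealChord (F : Type) [Field F] (ℓ : Submodule F (Fin 4 → F)) : Prop :=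
  ∃ u ∈ cubicVecs F, ∃ v ∈ cubicVecs F,
    Submodule.span F {u} ≠ Submodule.span F {v} ∧ ℓ = Submodule.span F {u, v}

/-- A real axis: the intersection of two distinct osculating planes. -/
def isRealAxis (F : Type) [Field F] (ℓ : Submodule F (Fin 4 → F)) : Prop :=
  ∃ π₁ π₂ : Submodule F (Fin 4 → F),
    isOscPlane F π₁ ∧ isOscPlane F π₂ ∧ π₁ ≠ π₂ ∧ ℓ = π₁ ⊓ π₂

/-- The `F_{q²}`-extension of a subspace of `F^4`. -/
def extendSub (F K : Type) [Field F] [Field K] [Algebra F K]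
    (W : Submodule F (Fin 4 → F)) : Submodule K (Fin 4 → K) :=
  Submodule.span K ((fun v i => algebraMap F K (v i)) '' (W : Set (Fin 4 → F)))

/-- An external line: a line containing no point of the twisted cubic. -/
def isExternal (F : Type) [Field F] (ℓ : Submodule F (Fin 4 → F)) : Prop :=
  isLine F ℓ ∧ ∀ P ∈ twistedCubic F, ¬ P ≤ ℓ

/-- An imaginary chord: a line disjoint from the cubic whose `F_{q²}`-extension joins a
pair of Frobenius-conjugate points `P(t)`, `P(t^q)` of the cubic over `F_{q²}`. -/
def isImagChord (F K : Type) [Field F] [Field K] [Algebra F K] (q : ℕ)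
    (ℓ : Submodule F (Fin 4 → F)) : Prop :=
  isExternal F ℓ ∧
  ∃ t : K, t ∉ Set.range (algebraMap F K) ∧
    extendSub F K ℓ =
      Submodule.span K
        ({![t ^ 3, t ^ 2, t, 1], ![(t ^ q) ^ 3, (t ^ q) ^ 2, t ^ q, 1]} :
          Set (Fin 4 → K))

/-- An imaginary axis: a line whose `F_{q²}`-extension is the intersection of a pair of
Frobenius-conjugate osculating planes `π_osc(t)`, `π_osc(t^q)` over `F_{q²}`. -/
def isImagAxis (F K : Type) [Field F] [Field K] [Algebra F K] (q : ℕ)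
    (ℓ : Submodule F (Fin 4 → F)) : Prop :=
  isLine F ℓ ∧
  ∃ t : K, t ∉ Set.range (algebraMap F K) ∧
    extendSub F K ℓ =
      planeOf K ![1, -(3 * t), 3 * t ^ 2, -(t ^ 3)] ⊓
        planeOf K ![1, -(3 * t ^ q), 3 * (t ^ q) ^ 2, -((t ^ q) ^ 3)]

/-- A unisecant: a line meeting the twisted cubic in exactly one point. -/
def isUnisecant (F : Type) [Field F] (ℓ : Submodule F (Fin 4 → F)) : Prop :=
  isLine F ℓ ∧ ∃! P, P ∈ twistedCubic F ∧ P ≤ ℓ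

/-- A `UΓ`-line: a non-tangent unisecant lying in some osculating plane. -/
def isUGamma (F : Type) [Field F] (ℓ : Submodule F (Fin 4 → F)) : Prop :=
  isUnisecant F ℓ ∧ ¬ isTangent F ℓ ∧ ∃ π, isOscPlane F π ∧ ℓ ≤ π

/-- A `UnΓ`-line: a non-tangent unisecant lying in no osculating plane. -/
def isUnGamma (F : Type) [Field F] (ℓ : Submodule F (Fin 4 → F)) : Prop :=
  isUnisecant F ℓ ∧ ¬ isTangent F ℓ ∧ ∀ π, isOscPlane F π → ¬ ℓ ≤ π

/-- An `EΓ`-line: an external line, other than an imaginary chord, lying in some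
osculating plane. -/
def isEGamma (F K : Type) [Field F] [Field K] [Algebra F K] (q : ℕ)
    (ℓ : Submodule F (Fin 4 → F)) : Prop :=
  isExternal F ℓ ∧ ¬ isImagChord F K q ℓ ∧ ∃ π, isOscPlane F π ∧ ℓ ≤ π

/-- For `q ≡ 0 (mod 3)`: the axis of `Γ`, the line `x0 = x3 = 0`. -/
def axisLine (F : Type) [Field F] : Submodule F (Fin 4 → F) :=
  Submodule.span F {![0, 1, 0, 0], ![0, 0, 1, 0]}

/-- For `q ≡ 0 (mod 3)`: an `EA`-line, i.e. an external line, other than an imaginary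
chord and other than the axis of `Γ`, meeting the axis of `Γ`. -/
def isEA (F K : Type) [Field F] [Field K] [Algebra F K] (q : ℕ)
    (ℓ : Submodule F (Fin 4 → F)) : Prop :=
  isExternal F ℓ ∧ ¬ isImagChord F K q ℓ ∧ ℓ ≠ axisLine F ∧ ℓ ⊓ axisLine F ≠ ⊥

end


section helpers
variable {F : Type} [Field F]

def vc (x y : F) : Fin 4 → F := ![x^3, x^2*y, x*y^2, y^3]

def Smat (g : Matrix (Fin 2) (Fin 2) F) : Matrix (Fin 4) (Fin 4) F :=
  !![g 0 0^3, g 0 0^2*g 0 1, g 0 0*g 0 1^2, g 0 1^3;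
     3*g 0 0^2*g 1 0, g 0 0^2*g 1 1+2*g 0 0*g 0 1*g 1 0, g 0 1^2*g 1 0+2*g 0 0*g 0 1*g 1 1, 3*g 0 1^2*g 1 1;
     3*g 0 0*g 1 0^2, g 0 1*g 1 0^2+2*g 0 0*g 1 0*g 1 1, g 0 0*g 1 1^2+2*g 0 1*g 1 0*g 1 1, 3*g 0 1*g 1 1^2;
     g 1 0^3, g 1 0^2*g 1 1, g 1 0*g 1 1^2, g 1 1^3]

def Shom : Matrix (Fin 2) (Fin 2) F →* Matrix (Fin 4) (Fin 4) F where
  toFun := Smat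
  map_one' := by
    ext i j; fin_cases i <;> fin_cases j <;> simp [Smat]
  map_mul' g h := by
    ext i j; fin_cases i <;> fin_cases j <;>
      simp [Smat, Matrix.mul_apply, Fin.sum_univ_succ] <;> ring

def SG : GL (Fin 2) F →* GL (Fin 4) F := Units.map Shom

lemma SG_coe (g : GL (Fin 2) F) : (SG g : Matrix (Fin 4) (Fin 4) F) = Smat (g : Matrix (Fin 2) (Fin 2) F) := rfl

lemma vc_S (g : Matrix (Fin 2) (Fin 2) F) (x y : F) :
    vc x y ᵥ* Smat g = vc (x * g 0 0 + y * g 1 0) (x * g 0 1 + y * g 1 1) := by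
  ext i; fin_cases i <;> simp [Smat, vc, Matrix.vecMul, dotProduct, Fin.sum_univ_succ] <;> ring

def oscf (x y : F) (v : Fin 4 → F) : F := y^3 * v 0 - 3*x*y^2* v 1 + 3*x^2*y * v 2 - x^3 * v 3

lemma oscf_S (g : Matrix (Fin 2) (Fin 2) F) (x y : F) (v : Fin 4 → F) :
    oscf (x * g 0 0 + y * g 1 0) (x * g 0 1 + y * g 1 1) (v ᵥ* Smat g) =
      (g 0 0 * g 1 1 - g 0 1 * g 1 0)^3 * oscf x y v := by
  simp [Smat, oscf, Matrix.vecMul, dotProduct, Fin.sum_univ_succ]; ring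

lemma projAct_mul (A B : GL (Fin 4) F) (W : Submodule F (Fin 4 → F)) :
    projAct F (A * B) W = projAct F B (projAct F A W) := by
  unfold projAct
  rw [← Submodule.map_comp]
  congr 1
  apply LinearMap.ext
  intro v
  simp [Matrix.vecMul_vecMul]

lemma projAct_one (W : Submodule F (Fin 4 → F)) : projAct F 1 W = W := by
  unfold projAct
  ext v
  simp

lemma mem_projAct (A : GL (Fin 4) F) (W : Submodule F (Fin 4 → F)) (v : Fin 4 → F) (hv : v ∈ W) :
    v ᵥ* (A : Matrix (Fin 4) (Fin 4) F) ∈ projAct F A W :=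
  Submodule.mem_map.2 ⟨v, hv, by simp⟩

lemma mem_projAct_iff (A : GL (Fin 4) F) (W : Submodule F (Fin 4 → F)) (v : Fin 4 → F) :
    v ∈ projAct F A W ↔ v ᵥ* ((A⁻¹ : GL (Fin 4) F) : Matrix (Fin 4) (Fin 4) F) ∈ W := by
  constructor
  · intro h
    have := mem_projAct A⁻¹ _ _ h
    rwa [← projAct_mul, mul_inv_cancel, projAct_one] at this
  · intro h
    have := mem_projAct A _ _ h
    rw [Matrix.vecMul_vecMul, ← Units.val_mul, inv_mul_cancel] at this
    simpa using this

lemma projAct_span (A : GL (Fin 4) F) (v : Fin 4 → F) :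
    projAct F A (Submodule.span F {v}) = Submodule.span F {v ᵥ* (A : Matrix (Fin 4) (Fin 4) F)} := by
  unfold projAct
  rw [Submodule.map_span, Set.image_singleton]; simp

lemma projAct_finrank (A : GL (Fin 4) F) (W : Submodule F (Fin 4 → F)) :
    Module.finrank F (projAct F A W) = Module.finrank F W := by
  unfold projAct
  have hi : Function.Injective (Matrix.vecMulLinear (A : Matrix (Fin 4) (Fin 4) F)) := by
    exact Matrix.vecMul_injective_of_isUnit A.isUnit
  exact (LinearEquiv.finrank_eq (Submodule.equivMapOfInjective _ hi W)).symm

lemma mem_cubic (P : Submodule F (Fin 4 → F)) :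
    P ∈ twistedCubic F ↔ ∃ x y : F, (x ≠ 0 ∨ y ≠ 0) ∧ P = Submodule.span F {vc x y} := by
  constructor
  · rintro ⟨v, ⟨t, rfl⟩ | rfl, rfl⟩
    · exact ⟨t, 1, Or.inr one_ne_zero, by simp [vc]⟩
    · exact ⟨1, 0, Or.inl one_ne_zero, by simp [vc]⟩
  · rintro ⟨x, y, h, rfl⟩
    by_cases hy : y = 0
    · subst hy
      have hx : x ≠ 0 := by simpa using h
      refine ⟨_, Or.inr rfl, ?_⟩
      have : vc x 0 = x^3 • ![(1:F),0,0,0] := by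
        ext i; fin_cases i <;> simp [vc]
      simp only [this]
      rw [Submodule.span_singleton_smul_eq (IsUnit.mk0 _ (pow_ne_zero 3 hx))]
    · refine ⟨_, Or.inl ⟨x / y, rfl⟩, ?_⟩
      have : vc x y = y^3 • ![(x/y)^3,(x/y)^2,x/y,1] := by
        ext i; fin_cases i <;> simp [vc] <;> field_simp
      simp only [this]
      rw [Submodule.span_singleton_smul_eq (IsUnit.mk0 _ (pow_ne_zero 3 hy))]

lemma vc_ne {x y : F} (h : x ≠ 0 ∨ y ≠ 0) : vc x y ≠ 0 := by
  intro h0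
  have h1 := congrFun h0 0
  have h2 := congrFun h0 3
  simp [vc] at h1 h2
  tauto

lemma vc_smul (k x y : F) : vc (k*x) (k*y) = k^3 • vc x y := by
  ext i; fin_cases i <;> simp [vc] <;> ring

lemma span_vc {x y x' y' : F} (h : x ≠ 0 ∨ y ≠ 0) (h' : x' ≠ 0 ∨ y' ≠ 0) :
    Submodule.span F {vc x y} = Submodule.span F {vc x' y'} ↔ x * y' = x' * y := by
  constructor
  · intro he
    have hm : vc x y ∈ Submodule.span F {vc x' y'} := he ▸ Submodule.mem_span_singleton_self _
    obtain ⟨k, hk⟩ := Submodule.mem_span_singleton.1 hm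
    have h0 := congrFun hk 0
    have h1 := congrFun hk 1
    have h2 := congrFun hk 2
    have h3 := congrFun hk 3
    simp [vc] at h0 h1 h2 h3
    have : (x * y' - x' * y)^3 = 0 := by
      linear_combination (-y'^3) * h0 + 3*y'^2*x' * h1 - 3 *y'*x'^2*h2 + x'^3 * h3
    have := pow_eq_zero_iff (three_ne_zero) |>.1 this
    linear_combination this
  · intro he
    obtain ⟨k, hk, h1, h2⟩ : ∃ k : F, k ≠ 0 ∧ x = k * x' ∧ y = k * y' := by
      by_cases hx : x' = 0
      · subst hx
        have hy : y' ≠ 0 := by simpa using h'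
        have hx : x = 0 := by simpa [hy] using he
        subst hx
        have hyy : y ≠ 0 := by simpa using h
        exact ⟨y / y', div_ne_zero hyy hy, by simp, by field_simp⟩
      · have : y = x / x' * y' := by field_simp; linear_combination -he
        refine ⟨x / x', div_ne_zero ?_ hx, by field_simp, this⟩
        rintro rfl
        simp at this; simp [this] at h
    rw [h1, h2, vc_smul, Submodule.span_singleton_smul_eq (IsUnit.mk0 _ (pow_ne_zero 3 hk))]

def UG (l : Submodule F (Fin 4 → F)) : Prop :=
  Module.finrank F l = 2 ∧ (∃ x y : F, (x ≠ 0 ∨ y ≠ 0) ∧ vc x y ∈ l) ∧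
  (∀ x y x' y' : F, (x ≠ 0 ∨ y ≠ 0) → (x' ≠ 0 ∨ y' ≠ 0) → vc x y ∈ l → vc x' y' ∈ l → x * y' = x' * y) ∧
  (∀ x y : F, (x ≠ 0 ∨ y ≠ 0) → ∃ v ∈ l, oscf x y v ≠ 0)

lemma tangent_osc (l : Submodule F (Fin 4 → F)) (h : isTangent F l) : ∃ p, isOscPlane F p ∧ l ≤ p := by
  rcases h with ⟨t, rfl⟩ | rfl
  · refine ⟨_, Or.inl ⟨t, rfl⟩, ?_⟩
    rw [tangentAt, Submodule.span_le]
    rintro v (rfl | rfl) <;> simp [oscPlane, planeOf, planeForm] <;> ring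
  · refine ⟨_, Or.inr rfl, ?_⟩
    rw [tangentAtInf, Submodule.span_le]
    rintro v (rfl | rfl) <;> simp [oscPlaneInf, planeOf, planeForm]

lemma isUnGamma_iff (l : Submodule F (Fin 4 → F)) : isUnGamma F l ↔ UG l := by
  constructor
  · rintro ⟨⟨h2, P, ⟨hP, hPl⟩, hu⟩, -, ho⟩
    obtain ⟨x, y, hxy, rfl⟩ := (mem_cubic P).1 hP
    have key : ∀ x' y' : F, (x' ≠ 0 ∨ y' ≠ 0) → vc x' y' ∈ l → Submodule.span F {vc x' y'} = Submodule.span F {vc x y} := by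
      intro x' y' h' hm
      exact hu _ ⟨(mem_cubic _).2 ⟨x', y', h', rfl⟩, by simpa using hm⟩
    refine ⟨h2, ⟨x, y, hxy, by simpa using hPl⟩, ?_, ?_⟩
    · intro x1 y1 x2 y2 h1 h2 m1 m2
      exact (span_vc h1 h2).1 ((key _ _ h1 m1).trans (key _ _ h2 m2).symm)
    · intro x1 y1 h1
      by_contra! hc
      by_cases hy : y1 = 0
      · subst hy
        have hx : x1 ≠ 0 := by simpa using h1
        refine ho _ (Or.inr rfl) ?_
        intro v hv
        have := hc v hv
        simpa [oscf, oscPlaneInf, planeOf, planeForm, hx] using this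
      · refine ho _ (Or.inl ⟨x1 / y1, rfl⟩) ?_
        intro v hv
        have := hc v hv
        simp [oscf, oscPlane, planeOf, planeForm] at this ⊢
        field_simp
        linear_combination this
  · rintro ⟨h2, ⟨x, y, hxy, hm⟩, hu, ho⟩
    have ho' : ∀ p, isOscPlane F p → ¬ l ≤ p := by
      rintro p (⟨t, rfl⟩ | rfl) hle
      · obtain ⟨v, hv, hne⟩ := ho t 1 (Or.inr one_ne_zero)
        apply hne
        have := hle hv
        simp [oscf, oscPlane, planeOf, planeForm] at this ⊢
        linear_combination this
      · obtain ⟨v, hv, hne⟩ := ho 1 0 (Or.inl one_ne_zero)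
        apply hne
        have := hle hv
        simp [oscf, oscPlaneInf, planeOf, planeForm] at this ⊢
        linear_combination this
    refine ⟨⟨h2, Submodule.span F {vc x y}, ⟨(mem_cubic _).2 ⟨x, y, hxy, rfl⟩, by simpa using hm⟩, ?_⟩, ?_, ho'⟩
    · rintro Q ⟨hQ, hQl⟩
      obtain ⟨x', y', h', rfl⟩ := (mem_cubic Q).1 hQ
      exact (span_vc h' hxy).2 (hu _ _ _ _ h' hxy (by simpa using hQl) hm)
    · intro ht
      obtain ⟨p, hp, hl⟩ := tangent_osc l ht
      exact ho' p hp hl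

lemma GL2_det (g : GL (Fin 2) F) : g 0 0 * g 1 1 - g 0 1 * g 1 0 ≠ 0 := by
  have := g.isUnit.map Matrix.detMonoidHom
  have h := this.ne_zero
  simpa [Matrix.det_fin_two] using h

lemma ne_of_GL (g : GL (Fin 2) F) {x y : F} (h : x ≠ 0 ∨ y ≠ 0) :
    x * g 0 0 + y * g 1 0 ≠ 0 ∨ x * g 0 1 + y * g 1 1 ≠ 0 := by
  by_contra! hc
  obtain ⟨h1, h2⟩ := hc
  have hd := GL2_det g
  have hx : (g 0 0 * g 1 1 - g 0 1 * g 1 0) * x = 0 := by linear_combination g 1 1 * h1 - g 1 0 * h2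
  have hy : (g 0 0 * g 1 1 - g 0 1 * g 1 0) * y = 0 := by linear_combination g 0 0 * h2 - g 0 1 * h1
  simp [hd] at hx hy
  tauto

lemma ex_of_GL (g : GL (Fin 2) F) {x y : F} (h : x ≠ 0 ∨ y ≠ 0) :
    ∃ x' y', (x' ≠ 0 ∨ y' ≠ 0) ∧ x' * g 0 0 + y' * g 1 0 = x ∧ x' * g 0 1 + y' * g 1 1 = y := by
  have hd := GL2_det g
  refine ⟨(x * g 1 1 - y * g 1 0) / (g 0 0 * g 1 1 - g 0 1 * g 1 0), (y * g 0 0 - x * g 0 1) / (g 0 0 * g 1 1 - g 0 1 * g 1 0), ?_, ?_, ?_⟩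
  rotate_left
  · rw [div_mul_eq_mul_div, div_mul_eq_mul_div, ← add_div, div_eq_iff hd]; ring
  · rw [div_mul_eq_mul_div, div_mul_eq_mul_div, ← add_div, div_eq_iff hd]; ring
  by_contra! hc
  obtain ⟨h1, h2⟩ := hc
  simp [hd] at h1 h2
  have hx : (g 0 0 * g 1 1 - g 0 1 * g 1 0) * x = 0 := by linear_combination g 0 0 * h1 + g 1 0 * h2
  have hy : (g 0 0 * g 1 1 - g 0 1 * g 1 0) * y = 0 := by linear_combination g 1 1 * h2 + g 0 1 * h1
  simp [hd] at hx hy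
  tauto

lemma UG_act (g : GL (Fin 2) F) (l : Submodule F (Fin 4 → F)) (h : UG l) : UG (projAct F (SG g) l) := by
  obtain ⟨h2, ⟨x, y, hxy, hm⟩, hu, ho⟩ := h
  refine ⟨by rw [projAct_finrank, h2], ⟨_, _, ne_of_GL g hxy, ?_⟩, ?_, ?_⟩
  · have := mem_projAct (SG g) l _ hm
    rwa [SG_coe, vc_S] at this
  · intro x1 y1 x2 y2 h1 h2 m1 m2
    rw [mem_projAct_iff, ← map_inv, SG_coe, vc_S] at m1 m2
    have := hu _ _ _ _ (ne_of_GL g⁻¹ h1) (ne_of_GL g⁻¹ h2) m1 m2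
    have hd := GL2_det g⁻¹
    apply mul_left_cancel₀ hd
    linear_combination this
  · intro x1 y1 h1
    obtain ⟨x', y', h', rfl, rfl⟩ := ex_of_GL g h1
    obtain ⟨v, hv, hne⟩ := ho _ _ h'
    refine ⟨_, mem_projAct (SG g) l _ hv, ?_⟩
    rw [SG_coe, oscf_S]
    exact mul_ne_zero (pow_ne_zero 3 (GL2_det g)) hne

lemma SG_mem (g : GL (Fin 2) F) : projAct F (SG g) ∈ Gq F := by
  refine ⟨⟨_, rfl⟩, ?_⟩
  have hsub : ∀ g : GL (Fin 2) F, ∀ P ∈ twistedCubic F, projAct F (SG g) P ∈ twistedCubic F := by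
    intro g P hP
    obtain ⟨x, y, h, rfl⟩ := (mem_cubic P).1 hP
    rw [projAct_span, SG_coe, vc_S]
    exact (mem_cubic _).2 ⟨_, _, ne_of_GL g h, rfl⟩
  apply Set.Subset.antisymm
  · rintro _ ⟨P, hP, rfl⟩
    exact hsub g P hP
  · intro P hP
    refine ⟨projAct F (SG g⁻¹) P, hsub _ _ hP, ?_⟩
    rw [← projAct_mul, ← map_mul, inv_mul_cancel, map_one, projAct_one]

lemma poly6 [Fintype F] (hq : 8 ≤ Fintype.card F) (c0 c1 c2 c3 c4 c5 c6 : F)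
    (h : ∀ t : F, c0 + c1 * t + c2 * t^2 + c3 * t^3 + c4 * t^4 + c5 * t^5 + c6 * t^6 = 0) :
    c0 = 0 ∧ c1 = 0 ∧ c2 = 0 ∧ c3 = 0 ∧ c4 = 0 ∧ c5 = 0 ∧ c6 = 0 := by
  open Polynomial in
  let p : F[X] := C c0 + C c1 * X + C c2 * X^2 + C c3 * X^3 + C c4 * X^4 + C c5 * X^5 + C c6 * X^6
  have hp : p = 0 := by
    apply Polynomial.eq_zero_of_natDegree_lt_card_of_eval_eq_zero' p Finset.univ
    · intro t _
      simp [p, h t]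
    · have : p.natDegree ≤ 6 := by unfold p; compute_degree
      rw [Finset.card_univ]; omega
  have hc : ∀ n, p.coeff n = 0 := by simp [hp]
  have a0 := hc 0
  have a1 := hc 1
  have a2 := hc 2
  have a3 := hc 3
  have a4 := hc 4
  have a5 := hc 5
  have a6 := hc 6
  simp [p, Polynomial.coeff_X, Polynomial.coeff_C, Polynomial.coeff_X_pow] at a0 a1 a2 a3 a4 a5 a6
  exact ⟨a0, a1, a2, a3, a4, a5, a6⟩

lemma diag_case [Fintype F] (hq : 8 ≤ Fintype.card F) (B : GL (Fin 4) F)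
    (hB : ∀ x y : F, (x ≠ 0 ∨ y ≠ 0) → ∃ k x' y' : F, vc x y ᵥ* (B : Matrix (Fin 4) (Fin 4) F) = k • vc x' y')
    (a d : F) (ha : a ≠ 0) (hd : d ≠ 0)
    (h0 : vc 1 0 ᵥ* (B : Matrix (Fin 4) (Fin 4) F) = a • vc 1 0)
    (h3 : vc 0 1 ᵥ* (B : Matrix (Fin 4) (Fin 4) F) = d • vc 0 1) :
    ∃ m : F, m ≠ 0 ∧ (B : Matrix (Fin 4) (Fin 4) F) = a • Smat !![1, 0; 0, m] := by
  have e00 := congrFun h0 0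
  have e01 := congrFun h0 1
  have e02 := congrFun h0 2
  have e03 := congrFun h0 3
  have e30 := congrFun h3 0
  have e31 := congrFun h3 1
  have e32 := congrFun h3 2
  have e33 := congrFun h3 3
  simp [vc, Matrix.vecMul, dotProduct, Fin.sum_univ_succ] at e00 e01 e02 e03 e30 e31 e32 e33
  have hr : ∀ t : F, ∀ w, w = vc t 1 ᵥ* (B : Matrix (Fin 4) (Fin 4) F) → w 0 * w 2 = w 1 ^2 ∧ w 1 * w 3 = w 2^2 ∧ w 0 * w 3 = w 1 * w 2 := by
    rintro t w hw
    obtain ⟨k, x', y', hk⟩ := hB t 1 (Or.inr one_ne_zero)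
    rw [hk] at hw
    subst hw
    simp [vc]
    refine ⟨?_, ?_, ?_⟩ <;> ring
  have hw : ∀ t : F, vc t 1 ᵥ* (B : Matrix (Fin 4) (Fin 4) F) =
      ![a * t^3 + B 1 0 * t^2 + B 2 0 * t, B 1 1 * t^2 + B 2 1 * t, B 1 2 * t^2 + B 2 2 * t, B 1 3 * t^2 + B 2 3 * t + d] := by
    intro t
    ext i; fin_cases i <;> simp [vc, Matrix.vecMul, dotProduct, Fin.sum_univ_succ, e00, e01, e02, e03, e30, e31, e32, e33] <;> ring
  have hr' := fun t => hr t _ (hw t).symm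
  simp at hr'
  have p1 := poly6 hq 0 0 (B 2 0 * B 2 2 - B 2 1 ^ 2) (B 1 0 * B 2 2 + B 2 0 * B 1 2 - 2 * B 1 1 * B 2 1)
    (a * B 2 2 + B 1 0 * B 1 2 - B 1 1 ^ 2) (a * B 1 2) 0
    (fun t => by linear_combination (hr' t).1)
  have p2 := poly6 hq 0 (B 2 1 * d) (B 1 1 * d + B 2 1 * B 2 3 - B 2 2 ^ 2)
    (B 1 1 * B 2 3 + B 2 1 * B 1 3 - 2 * B 1 2 * B 2 2)
    (B 1 1 * B 1 3 - B 1 2 ^ 2) 0 0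
    (fun t => by linear_combination (hr' t).2.1)
  have p3 := poly6 hq 0 (B 2 0 * d) (B 1 0 * d + B 2 0 * B 2 3 - B 2 1 * B 2 2)
    (a * d + B 1 0 * B 2 3 + B 2 0 * B 1 3 - B 1 1 * B 2 2 - B 2 1 * B 1 2)
    (a * B 2 3 + B 1 0 * B 1 3 - B 1 1 * B 1 2) (a * B 1 3) 0
    (fun t => by linear_combination (hr' t).2.2)
  obtain ⟨-, -, -, -, q4, q5, -⟩ := p1
  obtain ⟨-, r1, r2, -, -, -, -⟩ := p2
  obtain ⟨-, s1, s2, s3, s4, s5, -⟩ := p3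
  have z12 : B 1 2 = 0 := by simpa [ha] using q5
  have z21 : B 2 1 = 0 := by simpa [hd] using r1
  have z20 : B 2 0 = 0 := by simpa [hd] using s1
  have z13 : B 1 3 = 0 := by simpa [ha] using s5
  have z10 : B 1 0 = 0 := by simpa [hd, z20, z21] using s2
  have z23 : B 2 3 = 0 := by simpa [ha, z10, z12] using s4
  simp only [z12, z21, z20, z13, z10, z23, mul_zero, zero_mul, add_zero, sub_zero] at q4 r2 s3
  have h11 : B 1 1 ≠ 0 := by
    intro h
    simp [h, ha, hd] at s3
  have h22 : B 2 2 = a * (B 1 1 / a)^2 := by field_simp; linear_combination q4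
  have h33 : d = a * (B 1 1 / a)^3 := by
    have : a * d = B 1 1 * B 2 2 := by linear_combination s3
    apply mul_left_cancel₀ ha
    rw [this, h22]; field_simp
  refine ⟨B 1 1 / a, div_ne_zero h11 ha, ?_⟩
  have h11' : B 1 1 = a * (B 1 1 / a) := by field_simp
  generalize B 1 1 / a = m at *
  ext i j
  fin_cases i <;> fin_cases j <;> simp [Smat, e00, e01, e02, e03, e30, e31, e32, e33, z12, z21, z20, z13, z10, z23]
  · exact h11'
  · exact h22
  · exact h33

lemma projAct_smul (A A' : GL (Fin 4) F) (k : F) (hk : k ≠ 0)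
    (h : (A : Matrix (Fin 4) (Fin 4) F) = k • (A' : Matrix (Fin 4) (Fin 4) F)) : projAct F A = projAct F A' := by
  funext W
  unfold projAct
  rw [h]
  have : Matrix.vecMulLinear (k • (A' : Matrix (Fin 4) (Fin 4) F)) = k • Matrix.vecMulLinear (A' : Matrix (Fin 4) (Fin 4) F) := by
    apply LinearMap.ext; intro v; simp [Matrix.vecMul_smul]
  rw [this, Submodule.map_smul _ _ _ hk]

def mkg (a b c d : F) (h : a * d - b * c ≠ 0) : GL (Fin 2) F :=
  Matrix.GeneralLinearGroup.mkOfDetNeZero !![a, b; c, d] (by simpa [Matrix.det_fin_two] using h)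

lemma mkg_coe (a b c d : F) (h : a * d - b * c ≠ 0) : (mkg a b c d h : Matrix (Fin 2) (Fin 2) F) = !![a, b; c, d] := rfl

lemma Gq_eq [Fintype F] (hq : 8 ≤ Fintype.card F) (f) (hf : f ∈ Gq F) : ∃ g : GL (Fin 2) F, f = projAct F (SG g) := by
  obtain ⟨⟨A, rfl⟩, hA⟩ := hf
  have key : ∀ x y : F, (x ≠ 0 ∨ y ≠ 0) → ∃ k x' y' : F, k ≠ 0 ∧ (x' ≠ 0 ∨ y' ≠ 0) ∧
      vc x y ᵥ* (A : Matrix (Fin 4) (Fin 4) F) = k • vc x' y' := by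
    intro x y h
    have h1 : projAct F A (Submodule.span F {vc x y}) ∈ twistedCubic F := by
      rw [← hA]; exact ⟨_, (mem_cubic _).2 ⟨x, y, h, rfl⟩, rfl⟩
    rw [projAct_span] at h1
    obtain ⟨x', y', h', he⟩ := (mem_cubic _).1 h1
    have hm : vc x y ᵥ* (A : Matrix (Fin 4) (Fin 4) F) ∈ Submodule.span F {vc x' y'} :=
      he ▸ Submodule.mem_span_singleton_self _
    obtain ⟨k, hk⟩ := Submodule.mem_span_singleton.1 hm
    refine ⟨k, x', y', ?_, h', hk.symm⟩
    rintro rfl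
    rw [zero_smul] at hk
    apply vc_ne h
    apply Matrix.vecMul_injective_of_isUnit A.isUnit
    simp [← hk]
  obtain ⟨k1, x1, y1, hk1, h1, e1⟩ := key 1 0 (Or.inl one_ne_zero)
  obtain ⟨k2, x2, y2, hk2, h2, e2⟩ := key 0 1 (Or.inr one_ne_zero)
  have hdet : x1 * y2 - y1 * x2 ≠ 0 := by
    intro h0
    have hs := (span_vc h1 h2).2 (by linear_combination h0)
    have hm : vc x1 y1 ∈ Submodule.span F {vc x2 y2} := hs ▸ Submodule.mem_span_singleton_self _
    obtain ⟨m, hm⟩ := Submodule.mem_span_singleton.1 hm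
    have : vc 1 0 ᵥ* (A : Matrix (Fin 4) (Fin 4) F) = ((k1 * m / k2) • vc 0 1) ᵥ* (A : Matrix (Fin 4) (Fin 4) F) := by
      rw [Matrix.smul_vecMul, e1, e2, ← hm, smul_smul, smul_smul]
      congr 1; field_simp
    have := congrFun (Matrix.vecMul_injective_of_isUnit A.isUnit this) 0
    simp [vc] at this
  let g := mkg x1 y1 x2 y2 hdet
  have g1 : vc 1 0 ᵥ* (SG g : Matrix (Fin 4) (Fin 4) F) = vc x1 y1 := by
    rw [SG_coe, vc_S]; simp [g, mkg_coe]
  have g2 : vc 0 1 ᵥ* (SG g : Matrix (Fin 4) (Fin 4) F) = vc x2 y2 := by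
    rw [SG_coe, vc_S]; simp [g, mkg_coe]
  have hinv : (SG g : Matrix (Fin 4) (Fin 4) F) * (SG g⁻¹ : GL (Fin 4) F) = 1 := by
    rw [← Units.val_mul, ← map_mul, mul_inv_cancel, map_one, Units.val_one]
  obtain ⟨m, hm, hB⟩ := diag_case hq (A * SG g⁻¹) (by
      intro x y h
      obtain ⟨k, x', y', -, -, e⟩ := key x y h
      have := vc_S ((g⁻¹ : GL (Fin 2) F) : Matrix (Fin 2) (Fin 2) F) x' y'
      exact ⟨k, _, _, by rw [Units.val_mul, ← Matrix.vecMul_vecMul, e, Matrix.smul_vecMul, SG_coe, this]⟩) k1 k2 hk1 hk2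
    (by rw [Units.val_mul, ← Matrix.vecMul_vecMul, e1, Matrix.smul_vecMul, ← g1, Matrix.vecMul_vecMul, hinv, Matrix.vecMul_one])
    (by rw [Units.val_mul, ← Matrix.vecMul_vecMul, e2, Matrix.smul_vecMul, ← g2, Matrix.vecMul_vecMul, hinv, Matrix.vecMul_one])
  refine ⟨mkg 1 0 0 m (by simpa using hm) * g, projAct_smul _ _ k1 hk1 ?_⟩
  have hA' : A = (A * SG g⁻¹) * SG g := by rw [mul_assoc, ← map_mul]; simp
  rw [hA', Units.val_mul, hB, map_mul, Units.val_mul, SG_coe (mkg 1 0 0 m _), mkg_coe, Matrix.smul_mul]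

def l0 (F : Type) [Field F] : Submodule F (Fin 4 → F) := Submodule.span F ({![0, 0, 0, 1], ![1, 0, 1, 0]} : Set (Fin 4 → F))

lemma mem_l0 (v : Fin 4 → F) : v ∈ l0 F ↔ v 1 = 0 ∧ v 0 = v 2 := by
  rw [l0, Submodule.mem_span_pair]
  constructor
  · rintro ⟨a, b, rfl⟩; simp
  · rintro ⟨h1, h2⟩
    refine ⟨v 3, v 0, ?_⟩
    ext i; fin_cases i <;> simp [h1, h2]

lemma finrank_l0 : Module.finrank F (l0 F) = 2 := by
  have : LinearIndependent F ![(![0, 0, 0, 1] : Fin 4 → F), ![1, 0, 1, 0]] := by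
    rw [LinearIndependent.pair_iff]
    intro s t h
    have h3 := congrFun h 3
    have h0 := congrFun h 0
    simp at h3 h0
    exact ⟨h3, h0⟩
  have h := finrank_span_eq_card this
  rw [Matrix.range_cons, Matrix.range_cons, Matrix.range_empty, Set.union_empty, Set.singleton_union] at h
  rw [Fintype.card_fin] at h
  exact h

lemma UG_l0 : UG (l0 F) := by
  have hx : ∀ x y : F, vc x y ∈ l0 F → x = 0 := by
    intro x y h
    obtain ⟨h1, h2⟩ := (mem_l0 _).1 h
    simp [vc] at h1 h2
    rcases h1 with h1 | h1
    · exact h1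
    · simpa [h1] using h2
  refine ⟨finrank_l0, ⟨0, 1, Or.inr one_ne_zero, by rw [mem_l0]; simp [vc]⟩, ?_, ?_⟩
  · intro x y x' y' _ _ h h'
    rw [hx _ _ h, hx _ _ h']; simp
  · intro x y h
    by_cases h0 : x = 0
    · subst h0
      exact ⟨![1,0,1,0], by rw [mem_l0]; simp, by simpa [oscf] using h⟩
    · exact ⟨![0,0,0,1], by rw [mem_l0]; simp, by simpa [oscf] using h0⟩

lemma stab_l0 [CharP F 2] (g : GL (Fin 2) F) (h : projAct F (SG g) (l0 F) = l0 F) :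
    g 0 1 = 0 ∧ g 1 0 = 0 ∧ g 0 0 = g 1 1 := by
  have hd := GL2_det g
  have m1 : vc 0 1 ∈ l0 F := by rw [mem_l0]; simp [vc]
  have m2 : ![1,0,1,0] ∈ l0 F := by rw [mem_l0]; simp
  have i1 := mem_projAct (SG g) _ _ m1
  have i2 := mem_projAct (SG g) _ _ m2
  rw [h, mem_l0, SG_coe] at i1 i2
  rw [vc_S] at i1
  simp [vc] at i1
  have hc : g 1 0 = 0 := by
    obtain ⟨h1, h2⟩ := i1
    rcases h1 with h1 | h1
    · exact h1
    · simpa [h1] using h2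
  simp [Smat, hc, Matrix.vecMul, dotProduct, Fin.sum_univ_succ] at i2
  simp [hc] at hd
  obtain ⟨j1, j2⟩ := i2
  have hb : g 0 1 = 0 := by simpa [hd.1] using j1
  refine ⟨hb, hc, ?_⟩
  rw [hb] at j2
  have : g 0 0 ^ 2 = g 1 1 ^ 2 := by
    apply mul_left_cancel₀ hd.1
    linear_combination j2
  exact CharTwo.sq_injective this

lemma scal_act (g g' : GL (Fin 2) F) (c : F) (hc : c ≠ 0)
    (h : (g : Matrix (Fin 2) (Fin 2) F) = c • (g' : Matrix (Fin 2) (Fin 2) F)) : projAct F (SG g) = projAct F (SG g') := by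
  apply projAct_smul _ _ (c^3) (pow_ne_zero 3 hc)
  rw [SG_coe, SG_coe, h]
  ext i j; fin_cases i <;> fin_cases j <;> simp [Smat] <;> ring

lemma scal_of (g : GL (Fin 2) F) (h : g 0 1 = 0 ∧ g 1 0 = 0 ∧ g 0 0 = g 1 1) :
    (g : Matrix (Fin 2) (Fin 2) F) = g 0 0 • (1 : Matrix (Fin 2) (Fin 2) F) ∧ g 0 0 ≠ 0 := by
  obtain ⟨h1, h2, h3⟩ := h
  refine ⟨?_, ?_⟩
  · ext i j; fin_cases i <;> fin_cases j <;> simp [h1, h2, h3]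
  · have := GL2_det g
    intro h0
    simp [h0, h1] at this

lemma stab_l0_one [CharP F 2] (g : GL (Fin 2) F) (h : projAct F (SG g) (l0 F) = l0 F) :
    ∃ c : F, c ≠ 0 ∧ (g : Matrix (Fin 2) (Fin 2) F) = c • (1 : Matrix (Fin 2) (Fin 2) F) := by
  obtain ⟨h1, h2⟩ := scal_of g (stab_l0 g h)
  exact ⟨_, h2, h1⟩

lemma UG_iff [Finite F] [CharP F 2] (l : Submodule F (Fin 4 → F)) : UG l ↔ ∃ g : GL (Fin 2) F, l = projAct F (SG g) (l0 F) := by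
  constructor
  swap
  · rintro ⟨g, rfl⟩
    exact UG_act g _ UG_l0
  intro h
  obtain ⟨x, y, hxy, hm⟩ := h.2.1
  obtain ⟨g0, hg0⟩ : ∃ g0 : GL (Fin 2) F, vc 0 1 ᵥ* (SG g0 : Matrix (Fin 4) (Fin 4) F) = vc x y := by
    by_cases hx : x = 0
    · refine ⟨mkg 1 0 x y (by simpa [hx] using hxy), ?_⟩
      rw [SG_coe, vc_S]; simp [mkg_coe]
    · refine ⟨mkg 0 1 x y (by simpa using hx), ?_⟩
      rw [SG_coe, vc_S]; simp [mkg_coe]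
  have hl : l = projAct F (SG g0) (projAct F (SG g0⁻¹) l) := by
    rw [← projAct_mul, ← map_mul, inv_mul_cancel, map_one, projAct_one]
  suffices hs : ∃ g : GL (Fin 2) F, projAct F (SG g0⁻¹) l = projAct F (SG g) (l0 F) by
    obtain ⟨g, hg⟩ := hs
    refine ⟨g * g0, ?_⟩
    rw [map_mul, projAct_mul, ← hg, ← hl]
  have hm' : vc 0 1 ∈ projAct F (SG g0⁻¹) l := by
    rw [mem_projAct_iff, ← map_inv, inv_inv, hg0]; exact hm
  have h' := UG_act g0⁻¹ l h
  generalize projAct F (SG g0⁻¹) l = k at h' hm'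
  obtain ⟨k2, -, ku, ko⟩ := h'
  obtain ⟨v, hv, hne⟩ := ko 0 1 (Or.inr one_ne_zero)
  simp [oscf] at hne
  let b := v 1 / v 0
  let c := v 2 / v 0
  have hw : ∀ e : F, ![1, b, c, e] ∈ k := by
    intro e
    have : ![1, b, c, e] = (v 0)⁻¹ • v + (e - (v 0)⁻¹ * v 3) • vc 0 1 := by
      ext i; fin_cases i <;> simp [b, c, vc, hne] <;> field_simp
    rw [this]
    exact k.add_mem (k.smul_mem _ hv) (k.smul_mem _ hm')
  have hcb : c + b^2 ≠ 0 := by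
    intro h0
    have hcb : c = b^2 := by rwa [CharTwo.add_eq_zero] at h0
    have : vc 1 b ∈ k := by
      have := hw (b^3)
      rw [hcb] at this
      simpa [vc] using this
    have := ku _ _ _ _ (Or.inl one_ne_zero) (Or.inr one_ne_zero) this hm'
    simp at this
  obtain ⟨al, hal⟩ : IsSquare (c + b^2) := FiniteField.isSquare_of_char_two (ringChar.eq F 2) _
  have hal0 : al ≠ 0 := by rintro rfl; simp at hal; exact hcb hal
  refine ⟨mkg 1 b 0 al (by simpa using hal0), (Submodule.eq_of_le_of_finrank_eq ?_ ?_).symm⟩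
  · have h2 : (2:F) = 0 := CharTwo.two_eq_zero
    unfold projAct l0
    rw [Submodule.map_span, Submodule.span_le]
    rintro _ ⟨u, (rfl | rfl), rfl⟩
    · have : (![0,0,0,1] : Fin 4 → F) = vc 0 1 := by simp [vc]
      rw [this]
      have h3 : vc 0 1 ᵥ* ((SG (mkg 1 b 0 al (by simpa using hal0)) : GL (Fin 4) F) : Matrix (Fin 4) (Fin 4) F) = al^3 • vc 0 1 := by
        rw [SG_coe, vc_S, ← vc_smul]; simp [mkg_coe]
      simpa [h3] using k.smul_mem (al^3) hm'
    · have h3 : ![1,0,1,0] ᵥ* ((SG (mkg 1 b 0 al (by simpa using hal0)) : GL (Fin 4) F) : Matrix (Fin 4) (Fin 4) F) = ![1, b, c, b^3 + 3*b*al^2] := by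
        rw [SG_coe, mkg_coe]
        ext i; fin_cases i <;> simp [Smat, Matrix.vecMul, dotProduct, Fin.sum_univ_succ]
        linear_combination -hal + b^2 * h2
      simpa [h3] using hw _
  · rw [projAct_finrank, finrank_l0, k2]

def nm : Option F × F × Fˣ → GL (Fin 2) F
  | (some u, y, k) => mkg (k + u * y) y u 1 (by ring_nf; exact k.ne_zero)
  | (none, x, k) => mkg x k 1 0 (by simp)

lemma nm_ex (g : GL (Fin 2) F) : ∃ n : Option F × F × Fˣ, ∃ c : F, c ≠ 0 ∧ (g : Matrix (Fin 2) (Fin 2) F) = c • (nm n : Matrix (Fin 2) (Fin 2) F) := by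
  have hd := GL2_det g
  by_cases h : g 1 1 = 0
  · have hb : g 0 1 ≠ 0 := by intro h0; simp [h, h0] at hd
    have hc : g 1 0 ≠ 0 := by intro h0; simp [h, h0] at hd
    refine ⟨(none, g 0 0 / g 1 0, Units.mk0 (g 0 1 / g 1 0) (div_ne_zero hb hc)), g 1 0, hc, ?_⟩
    ext i j; fin_cases i <;> fin_cases j <;> simp [nm, mkg_coe, h] <;> field_simp
  · refine ⟨(some (g 1 0 / g 1 1), g 0 1 / g 1 1, Units.mk0 ((g 0 0 * g 1 1 - g 0 1 * g 1 0) / g 1 1 ^ 2) (div_ne_zero hd (pow_ne_zero 2 h))), g 1 1, h, ?_⟩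
    ext i j; fin_cases i <;> fin_cases j <;> simp [nm, mkg_coe] <;> field_simp
    ring

lemma nm_inj (n n' : Option F × F × Fˣ) (c : F) (hc : c ≠ 0)
    (h : (nm n : Matrix (Fin 2) (Fin 2) F) = c • (nm n' : Matrix (Fin 2) (Fin 2) F)) : n = n' := by
  have h00 := congrFun (congrFun h 0) 0
  have h01 := congrFun (congrFun h 0) 1
  have h10 := congrFun (congrFun h 1) 0
  have h11 := congrFun (congrFun h 1) 1
  rcases n with ⟨_ | u, y, k⟩ <;> rcases n' with ⟨_ | u', y', k'⟩ <;>
    simp [nm, mkg_coe] at h00 h01 h10 h11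
  · subst h10; simp at h00 h01; ext <;> simp_all
  · exact absurd h11.symm hc
  · subst h11; simp at h00 h01 h10; subst h01 h10; ext <;> simp_all
end helpers

theorem stmt_13 (q : ℕ) (F : Type) [Field F] [Fintype F]
    (hcard : Fintype.card F = q) (hq : 8 ≤ q) (hev : Even q) :
    {ℓ : Submodule F (Fin 4 → F) | isUnGamma F ℓ} = lineOrbit F (Submodule.span F ({![0, 0, 0, 1], ![1, 0, 1, 0]} : Set (Fin 4 → F))) ∧
    {ℓ : Submodule F (Fin 4 → F) | isUnGamma F ℓ}.ncard = q ^ 3 - q ∧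
    ∀ ℓ : Submodule F (Fin 4 → F), isUnGamma F ℓ → lineStab F ℓ = {id} := by
  subst hcard
  have : CharP F 2 := by
    have := FiniteField.even_card_iff_char_two (F := F)
    rw [Nat.even_iff] at hev
    exact ringChar.of_eq (this.2 hev)
  have hset : {ℓ : Submodule F (Fin 4 → F) | isUnGamma F ℓ} = Set.range (fun n => projAct F (SG (nm n)) (l0 F)) := by
    ext l
    rw [Set.mem_ofPred_eq, isUnGamma_iff, UG_iff]
    constructor
    · rintro ⟨g, rfl⟩
      obtain ⟨n, c, hc, h⟩ := nm_ex g
      exact ⟨n, by rw [scal_act _ _ c hc h]⟩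
    · rintro ⟨n, rfl⟩
      exact ⟨_, rfl⟩
  refine ⟨?_, ?_, ?_⟩
  · ext l
    rw [Set.mem_ofPred_eq, isUnGamma_iff, UG_iff]
    constructor
    · rintro ⟨g, rfl⟩
      exact ⟨_, SG_mem g, rfl⟩
    · rintro ⟨f, hf, rfl⟩
      obtain ⟨g, rfl⟩ := Gq_eq hq f hf
      exact ⟨g, rfl⟩
  · classical
    have hinj : Function.Injective (fun n => projAct F (SG (nm n)) (l0 F)) := by
      intro n n' h
      simp only at h
      have h2 : projAct F (SG (nm n * (nm n')⁻¹)) (l0 F) = l0 F := by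
        rw [map_mul, projAct_mul, h, ← projAct_mul, ← map_mul, mul_inv_cancel, map_one, projAct_one]
      obtain ⟨c, hc, h3⟩ := stab_l0_one _ h2
      apply nm_inj n n' c hc
      have : nm n = (nm n * (nm n')⁻¹) * nm n' := by simp
      rw [this, Units.val_mul, h3]; simp
    rw [hset, ← Set.image_univ, Set.ncard_image_of_injective _ hinj, Set.ncard_univ]
    rw [Nat.card_prod, Nat.card_prod, Nat.card_eq_fintype_card, Nat.card_eq_fintype_card, Nat.card_eq_fintype_card, Fintype.card_option, Fintype.card_units]
    generalize Fintype.card F = q at *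
    obtain ⟨p, rfl⟩ : ∃ p, q = p + 1 := ⟨q - 1, by omega⟩
    rw [Nat.add_sub_cancel]
    apply Nat.eq_sub_of_add_eq
    ring
  · intro l hl
    rw [isUnGamma_iff, UG_iff] at hl
    obtain ⟨h, rfl⟩ := hl
    ext f
    constructor
    · rintro ⟨hf, hfl⟩
      obtain ⟨g, rfl⟩ := Gq_eq hq f hf
      have h2 : projAct F (SG (h * g * h⁻¹)) (l0 F) = l0 F := by
        rw [map_mul, map_mul, projAct_mul, projAct_mul, hfl, ← projAct_mul, ← map_mul, mul_inv_cancel, map_one, projAct_one]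
      obtain ⟨c, hc, h3⟩ := stab_l0_one _ h2
      have h4 : (g : Matrix (Fin 2) (Fin 2) F) = c • ((1 : GL (Fin 2) F) : Matrix (Fin 2) (Fin 2) F) := by
        have : g = h⁻¹ * (h * g * h⁻¹) * h := by group
        rw [this, Units.val_mul, Units.val_mul, h3, Matrix.mul_smul, Matrix.smul_mul, mul_one, ← Units.val_mul, inv_mul_cancel]
      rw [Set.mem_singleton_iff, scal_act _ _ c hc h4, map_one]
      funext W
      exact projAct_one W
    · rintro rfl
      have : (id : Submodule F (Fin 4 → F) → Submodule F (Fin 4 → F)) = projAct F (SG 1) := by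
        funext W; rw [map_one, projAct_one]; rfl
      exact ⟨this ▸ SG_mem 1, rfl⟩
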